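/- Let R be a commutative ring, A and B R-modules, and ψ : A → B an injective R-linear map admitting an R-linear retraction ρ : B → A with ρ ∘ ψ = id_A. Let ι : A → B be an R-linear map such that ι ∘ ρ : B → B is locally nilpotent, and set f = ψ + ι. Then the automorphism id_B + ι∘ρ of B maps the submodule ψ(A) onto the submodule f(A), and consequently it induces an isomorphism of quotient modules B / ψ(A) ≅ B / f(A). -/

import Mathlib

/-!
If `n` is locally nilpotent, the Neumann series `∑ (-n) ^ i` is a finite sum at each vector, and
the finite geometric sum identity shows that it inverts `1 + n`. For `n = ι ∘ ρ` the retraction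
identity gives `(1 + ι ∘ ρ) ∘ ψ = ψ + ι`, so the automorphism `1 + ι ∘ ρ` carries the range of `ψ`
onto that of `ψ + ι` and descends to the quotients.
-/

/-- Local nilpotency of an endomorphism: each vector is killed by some power, which may depend on
the vector. This is the pointwise condition under which Neumann series make sense. -/
def IsLocallyNilpotent {R M : Type*} [Semiring R] [AddCommMonoid M] [Module R M]
    (n : Module.End R M) : Prop :=
  ∀ x : M, ∃ k : ℕ, (n ^ k) x = 0

namespace IsLocallyNilpotent

variable {R M : Type*} [Semiring R] [AddCommGroup M] [Module R M] {n : Module.End R M}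

theorem neg (hn : IsLocallyNilpotent n) : IsLocallyNilpotent (-n) := fun x ↦ by
  obtain ⟨k, hk⟩ := hn x
  exact ⟨k, by rw [neg_pow, Module.End.mul_apply, hk, map_zero]⟩

theorem bijective_one_sub (hn : IsLocallyNilpotent n) : Function.Bijective ⇑(1 - n) := by
  constructor
  · refine (injective_iff_map_eq_zero (1 - n)).2 fun x hx ↦ ?_
    obtain ⟨k, hk⟩ := hn x
    calc
      x = (1 - n ^ k) x := by rw [LinearMap.sub_apply, hk, sub_zero, Module.End.one_apply]
      _ = (∑ i ∈ Finset.range k, n ^ i) ((1 - n) x) := by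
        rw [← geom_sum_mul_neg, Module.End.mul_apply]
      _ = 0 := by rw [hx, map_zero]
  · intro x
    obtain ⟨k, hk⟩ := hn x
    refine ⟨(∑ i ∈ Finset.range k, n ^ i) x, ?_⟩
    rw [← Module.End.mul_apply, mul_neg_geom_sum, LinearMap.sub_apply, hk, sub_zero,
      Module.End.one_apply]

theorem bijective_one_add (hn : IsLocallyNilpotent n) : Function.Bijective ⇑(1 + n) := by
  simpa only [sub_neg_eq_add] using hn.neg.bijective_one_sub

end IsLocallyNilpotent

theorem map_id_add_comp_range {R A B : Type*} [Semiring R] [AddCommMonoid A] [Module R A]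
    [AddCommMonoid B] [Module R B] {ψ : A →ₗ[R] B} {ρ : B →ₗ[R] A}
    (hρψ : ρ.comp ψ = LinearMap.id) (ι : A →ₗ[R] B) :
    Submodule.map ((LinearMap.id : B →ₗ[R] B) + ι.comp ρ) (LinearMap.range ψ) =
      LinearMap.range (ψ + ι) := by
  rw [← LinearMap.range_comp, LinearMap.add_comp, LinearMap.id_comp, LinearMap.comp_assoc, hρψ,
    LinearMap.comp_id]

theorem quotient_iso_of_locally_nilpotent_perturbation_general
    {R A B : Type*} [Ring R] [AddCommGroup A] [Module R A] [AddCommGroup B] [Module R B]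
    (ψ : A →ₗ[R] B) (ρ : B →ₗ[R] A) (hρψ : ρ.comp ψ = LinearMap.id)
    (ι : A →ₗ[R] B) (hln : IsLocallyNilpotent (ι.comp ρ)) :
    Function.Bijective ⇑((LinearMap.id : B →ₗ[R] B) + ι.comp ρ) ∧
      Submodule.map ((LinearMap.id : B →ₗ[R] B) + ι.comp ρ) (LinearMap.range ψ) =
        LinearMap.range (ψ + ι) ∧
      ∃ e : (B ⧸ LinearMap.range ψ) ≃ₗ[R] (B ⧸ LinearMap.range (ψ + ι)),
        ∀ b : B, e (Submodule.Quotient.mk b) = Submodule.Quotient.mk (b + ι (ρ b)) := by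
  have hbij : Function.Bijective ⇑((LinearMap.id : B →ₗ[R] B) + ι.comp ρ) := hln.bijective_one_add
  have hmap := map_id_add_comp_range hρψ ι
  exact ⟨hbij, hmap,
    Submodule.Quotient.equiv _ _ (LinearEquiv.ofBijective _ hbij) hmap, fun _ ↦ rfl⟩

/-- With `ψ : A → B` injective `R`-linear, `ρ : B → A` a retraction
(`ρ ∘ ψ = id`), `ι : A → B` `R`-linear with `ι ∘ ρ` locally nilpotent, and `f = ψ + ι`:
the automorphism `id + ι∘ρ` of `B` maps the submodule `ψ(A)` onto the submodule `f(A)`,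
and consequently it induces an isomorphism of quotient modules `B / ψ(A) ≅ B / f(A)`. -/
theorem quotient_iso_of_locally_nilpotent_perturbation
    {R : Type*} [CommRing R] {A B : Type*} [AddCommGroup A] [Module R A]
    [AddCommGroup B] [Module R B]
    (ψ : A →ₗ[R] B) (hψ : Function.Injective ψ)
    (ρ : B →ₗ[R] A) (hρψ : ρ.comp ψ = LinearMap.id)
    (ι : A →ₗ[R] B) (hln : ∀ b : B, ∃ k : ℕ, ((ι.comp ρ) ^ k) b = 0) :
    Submodule.map ((LinearMap.id : B →ₗ[R] B) + ι.comp ρ) (LinearMap.range ψ) =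
        LinearMap.range (ψ + ι) ∧
      Nonempty ((B ⧸ LinearMap.range ψ) ≃ₗ[R] (B ⧸ LinearMap.range (ψ + ι))) := by
  obtain ⟨-, hmap, e, -⟩ :=
    quotient_iso_of_locally_nilpotent_perturbation_general ψ ρ hρψ ι hln
  exact ⟨hmap, ⟨e⟩⟩
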